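/- arXiv:0903.3446 — 2 statements merged into one kernel-verified Lean document; each statement's English description precedes it below -/
import Mathlib

section
/- For all p, q ∈ {1,…,N}: (i) ∫_{∂B₁} Σ_{i,j=1}^N H_{ij}(y)² y_p y_q dσ(y) = (2|S^{N−1}|/(N(N+2)(N+4))) Σ_{i,j,k=1}^N (W_{ikjp}+W_{ipjk})(W_{ikjq}+W_{iqjk}) + (|S^{N−1}|/(2N(N+2)(N+4))) (Σ_{i,j,k,ℓ=1}^N (W_{ikjℓ}+W_{iℓjk})²) δ_{pq}; and (ii) ∫_{∂B₁} Σ_{t=1}^N H_{pt}(y) H_{qt}(y) dσ(y) = (|S^{N−1}|/(2N(N+2))) Σ_{i,j,k=1}^N (W_{ikjp}+W_{ipjk})(W_{ikjq}+W_{iqjk}). -/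
open scoped BigOperators
open MeasureTheory

noncomputable section

/-- The partial derivative `∂f/∂y_i` of a function on Euclidean space. -/
def pd (N : ℕ) (i : Fin N) (f : EuclideanSpace ℝ (Fin N) → ℝ) :
    EuclideanSpace ℝ (Fin N) → ℝ :=
  fun y => fderiv ℝ f y (EuclideanSpace.single i 1)

/-- `H_{ij}(y) = Σ_{p,q} W_{ipjq} y_p y_q`. -/
def Hmat (N : ℕ) (W : Fin N → Fin N → Fin N → Fin N → ℝ) (i j : Fin N)
    (y : EuclideanSpace ℝ (Fin N)) : ℝ :=
  ∑ p : Fin N, ∑ q : Fin N, W i p j q * y p * y q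

/-- The surface measure on the unit sphere `S^{N-1} ⊂ ℝ^N`. -/
def sphereMeasure (N : ℕ) :
    Measure (Metric.sphere (0 : EuclideanSpace ℝ (Fin N)) 1) :=
  (volume : Measure (EuclideanSpace ℝ (Fin N))).toSphere

/-- `|S^{N-1}|`, the total surface measure of the unit sphere in `ℝ^N`. -/
def sphereArea (N : ℕ) : ℝ := (sphereMeasure N Set.univ).toReal

/-!
For `f` homogeneous of degree `k + 1` on a space of dimension `n`, integration by parts against the
Gaussian `exp (-‖y‖ ^ 2)` gives `2 ∫ ⟪v, y⟫ f = ∫ D_v f`; in polar coordinates the radial factors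
differ by `(n + k) / 2`, so that `(n + k) ∫ ⟪v, y⟫ f = ∫ D_v f` over the unit sphere. Summed over an
orthonormal basis this becomes `(n + k) ∫ ⟪A y, y⟫ f = tr A ∫ f + ∫ Df(y)(A y)` for `f` of degree
`k`, a recursion that computes the integral of a product of quadratic forms from traces of products
of their operators. Now `H_{ij}` is half the quadratic form of the symmetric matrix
`M_{ab} = W_{iajb} + W_{ibja}`, which is traceless because `W` is, and `y_p y_q` is the quadratic
form of a matrix unit.
-/

open Set Metric
open Module (finrank)
open LinearMap (trace)
open Matrix (toEuclideanLin)
open scoped RealInnerProductSpace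

section PolarCoordinates

variable {E : Type*} [NormedAddCommGroup E] [NormedSpace ℝ E]

/-- Positive homogeneity of degree `k` for real-valued functions: `f (r y) = r ^ k f y` for `r > 0`.
Such functions separate in polar coordinates. -/
def IsPosHomogeneous (k : ℕ) (f : E → ℝ) : Prop :=
  ∀ ⦃r : ℝ⦄, 0 < r → ∀ y, f (r • y) = r ^ k * f y

lemma isPosHomogeneous_const (c : ℝ) : IsPosHomogeneous 0 (fun _ : E ↦ c) :=
  fun _ _ _ ↦ by simp

lemma IsPosHomogeneous.mul {j k : ℕ} {f g : E → ℝ} (hf : IsPosHomogeneous j f)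
    (hg : IsPosHomogeneous k g) : IsPosHomogeneous (j + k) (fun y ↦ f y * g y) :=
  fun r hr y ↦ by simp only [hf hr, hg hr]; ring

lemma IsPosHomogeneous.linearMap_mul {k : ℕ} {f : E → ℝ} (hf : IsPosHomogeneous k f)
    (φ : E →ₗ[ℝ] ℝ) : IsPosHomogeneous (k + 1) (fun y ↦ φ y * f y) :=
  fun r hr y ↦ by simp only [hf hr, map_smul, smul_eq_mul]; ring

lemma IsPosHomogeneous.fderiv_apply {k : ℕ} {f : E → ℝ} (hf : IsPosHomogeneous (k + 1) f)
    (v : E) : IsPosHomogeneous k (fun y ↦ fderiv ℝ f y v) := by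
  intro r hr y
  have hscale : (fun z ↦ f (r • z)) = r ^ (k + 1) • f := funext (hf hr)
  have hfderiv : r • fderiv ℝ f (r • y) = r ^ (k + 1) • fderiv ℝ f y := by
    rw [← fderiv_comp_smul, hscale, fderiv_const_smul_field, Pi.smul_apply]
  apply mul_left_cancel₀ hr.ne'
  calc r * fderiv ℝ f (r • y) v = (r • fderiv ℝ f (r • y)) v := rfl
    _ = r ^ (k + 1) * fderiv ℝ f y v := by rw [hfderiv]; rfl
    _ = r * (r ^ k * fderiv ℝ f y v) := by ring

lemma integral_volumeIoiPow (n : ℕ) (φ : ℝ → ℝ) :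
    ∫ r : Ioi (0 : ℝ), φ r ∂Measure.volumeIoiPow n = ∫ r in Ioi (0 : ℝ), r ^ n * φ r := by
  have hpow : Measurable fun r : Ioi (0 : ℝ) ↦ ENNReal.ofReal (r.1 ^ n) := by fun_prop
  rw [Measure.volumeIoiPow, integral_withDensity_eq_integral_toReal_smul hpow (by simp),
    ← integral_subtype_comap measurableSet_Ioi fun r ↦ r ^ n * φ r]
  congr! 2 with r
  rw [ENNReal.toReal_ofReal (pow_nonneg (le_of_lt r.2) n), smul_eq_mul]

variable [FiniteDimensional ℝ E] {k : ℕ} {f : E → ℝ}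

lemma IsPosHomogeneous.abs_le_mul_norm_pow (hf : IsPosHomogeneous k f) (hc : Continuous f) :
    ∃ C, ∀ y ≠ 0, |f y| ≤ C * ‖y‖ ^ k := by
  obtain ⟨C, hC⟩ := (isCompact_sphere (0 : E) 1).exists_bound_of_continuousOn hc.continuousOn
  refine ⟨C, fun y hy ↦ ?_⟩
  have hy' : 0 < ‖y‖ := norm_pos_iff.2 hy
  have hunit : ‖f (‖y‖⁻¹ • y)‖ ≤ C := hC _ (by simp [norm_smul, hy'.ne'])
  calc |f y| = |f (‖y‖ • ‖y‖⁻¹ • y)| := by rw [smul_inv_smul₀ hy'.ne']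
    _ = ‖f (‖y‖⁻¹ • y)‖ * ‖y‖ ^ k := by
      rw [hf hy', abs_mul, abs_of_nonneg (by positivity), mul_comm, Real.norm_eq_abs]
    _ ≤ C * ‖y‖ ^ k := by gcongr

variable [MeasurableSpace E] [BorelSpace E] {μ : Measure E} [μ.IsAddHaarMeasure]

lemma integrable_toSphere_of_continuous (hf : Continuous f) :
    Integrable (fun y : sphere (0 : E) 1 ↦ f y) μ.toSphere :=
  (hf.comp continuous_subtype_val).integrable_of_hasCompactSupport
    (HasCompactSupport.of_compactSpace _)

variable [Nontrivial E]

theorem IsPosHomogeneous.integral_mul_fun_norm (hf : IsPosHomogeneous k f) (φ : ℝ → ℝ) :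
    ∫ y, f y * φ ‖y‖ ∂μ = (∫ y : sphere (0 : E) 1, f y ∂μ.toSphere) *
      ∫ r in Ioi (0 : ℝ), r ^ (finrank ℝ E - 1 + k) * φ r := by
  let F : sphere (0 : E) 1 × Ioi (0 : ℝ) → ℝ := fun x ↦ f x.1 * (x.2.1 ^ k * φ x.2)
  have hF (y : ({0}ᶜ : Set E)) : f y * φ ‖y.1‖ = F (homeomorphUnitSphereProd E y) := by
    have hy : 0 < ‖y.1‖ := norm_pos_iff.2 y.2
    have hfy := hf hy (‖y.1‖⁻¹ • y)
    rw [smul_inv_smul₀ hy.ne'] at hfy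
    simp only [F, homeomorphUnitSphereProd_apply_fst_coe, homeomorphUnitSphereProd_apply_snd_coe]
    rw [hfy]
    ring
  calc ∫ y, f y * φ ‖y‖ ∂μ = ∫ y : ({0}ᶜ : Set E), f y * φ ‖y.1‖ ∂μ.comap (↑) := by
        rw [integral_subtype_comap (measurableSet_singleton _).compl fun y ↦ f y * φ ‖y‖,
          restrict_compl_singleton]
    _ = ∫ x, F x ∂μ.toSphere.prod (.volumeIoiPow (finrank ℝ E - 1)) := by
        simp_rw [hF]
        exact μ.measurePreserving_homeomorphUnitSphereProd.integral_comp
          (Homeomorph.measurableEmbedding _) F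
    _ = (∫ y : sphere (0 : E) 1, f y ∂μ.toSphere) *
          ∫ r : Ioi (0 : ℝ), r.1 ^ k * φ r ∂.volumeIoiPow (finrank ℝ E - 1) :=
        integral_prod_mul (fun y : sphere (0 : E) 1 ↦ f y) fun r : Ioi (0 : ℝ) ↦ r.1 ^ k * φ r
    _ = _ := by
        rw [integral_volumeIoiPow (finrank ℝ E - 1) fun r ↦ r ^ k * φ r]
        simp_rw [pow_add, mul_assoc]

end PolarCoordinates

section Gaussian

lemma integrableOn_pow_mul_exp_neg_sq (m : ℕ) :
    IntegrableOn (fun r : ℝ ↦ r ^ m * Real.exp (-r ^ 2)) (Ioi 0) := by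
  simpa using integrableOn_rpow_mul_exp_neg_rpow (p := 2) (s := m)
    (neg_one_lt_zero.trans_le m.cast_nonneg) two_pos

lemma integral_pow_mul_exp_neg_sq (m : ℕ) :
    ∫ r in Ioi (0 : ℝ), r ^ m * Real.exp (-r ^ 2) = 1 / 2 * Real.Gamma ((m + 1) / 2) := by
  simpa using integral_rpow_mul_exp_neg_rpow (p := 2) (q := m) two_pos
    (neg_one_lt_zero.trans_le m.cast_nonneg)

lemma integral_pow_mul_exp_neg_sq_pos (m : ℕ) :
    0 < ∫ r in Ioi (0 : ℝ), r ^ m * Real.exp (-r ^ 2) := by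
  rw [integral_pow_mul_exp_neg_sq]
  have := Real.Gamma_pos_of_pos (s := (m + 1) / 2) (by positivity)
  positivity

lemma two_mul_integral_pow_add_two_mul_exp_neg_sq (m : ℕ) :
    2 * ∫ r in Ioi (0 : ℝ), r ^ (m + 2) * Real.exp (-r ^ 2) =
      (m + 1) * ∫ r in Ioi (0 : ℝ), r ^ m * Real.exp (-r ^ 2) := by
  have hm : ((m + 2 : ℕ) + 1 : ℝ) / 2 = (m + 1) / 2 + 1 := by push_cast; ring
  rw [integral_pow_mul_exp_neg_sq, integral_pow_mul_exp_neg_sq, hm,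
    Real.Gamma_add_one (by positivity)]
  ring

lemma IsPosHomogeneous.integrable_mul_exp_neg_norm_sq {E : Type*} [NormedAddCommGroup E]
    [NormedSpace ℝ E] [FiniteDimensional ℝ E] [Nontrivial E] [MeasurableSpace E] [BorelSpace E]
    {μ : Measure E} [μ.IsAddHaarMeasure] {k : ℕ} {f : E → ℝ} (hf : IsPosHomogeneous k f)
    (hc : Continuous f) : Integrable (fun y ↦ f y * Real.exp (-‖y‖ ^ 2)) μ := by
  obtain ⟨C, hC⟩ := hf.abs_le_mul_norm_pow hc
  have hbound : Integrable (fun y : E ↦ C * (‖y‖ ^ k * Real.exp (-‖y‖ ^ 2))) μ := by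
    refine ((integrable_fun_norm_addHaar μ
      (f := fun r ↦ r ^ k * Real.exp (-r ^ 2))).2 ?_).const_mul C
    simpa only [smul_eq_mul, ← mul_assoc, ← pow_add] using
      integrableOn_pow_mul_exp_neg_sq (finrank ℝ E - 1 + k)
  refine hbound.mono' (by fun_prop) ?_
  filter_upwards [Measure.ae_ne μ 0] with y hy
  rw [Real.norm_eq_abs, abs_mul, Real.abs_exp, ← mul_assoc]
  gcongr
  exact hC y hy

variable {E : Type*} [NormedAddCommGroup E] [InnerProductSpace ℝ E]

lemma hasFDerivAt_exp_neg_norm_sq (y : E) :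
    HasFDerivAt (fun y : E ↦ Real.exp (-‖y‖ ^ 2))
      (Real.exp (-‖y‖ ^ 2) • -((2 : ℕ) • innerSL ℝ y : E →L[ℝ] ℝ)) y :=
  (hasStrictFDerivAt_norm_sq y).hasFDerivAt.fun_neg.exp

lemma IsPosHomogeneous.inner_mul {k : ℕ} {f : E → ℝ} (hf : IsPosHomogeneous k f) (v : E) :
    IsPosHomogeneous (k + 1) (fun y ↦ ⟪v, y⟫ * f y) :=
  hf.linearMap_mul (innerₗ E v)

variable [FiniteDimensional ℝ E] [Nontrivial E] [MeasurableSpace E] [BorelSpace E]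
  {μ : Measure E} [μ.IsAddHaarMeasure] {k : ℕ} {f : E → ℝ}

theorem IsPosHomogeneous.two_mul_integral_inner_mul_exp_neg_norm_sq
    (hf : IsPosHomogeneous (k + 1) f) (hd : ContDiff ℝ 1 f) (v : E) :
    2 * ∫ y, ⟪v, y⟫ * f y * Real.exp (-‖y‖ ^ 2) ∂μ =
      ∫ y, fderiv ℝ f y v * Real.exp (-‖y‖ ^ 2) ∂μ := by
  have hderiv (y : E) : f y * fderiv ℝ (fun y : E ↦ Real.exp (-‖y‖ ^ 2)) y v =
      -(2 * (⟪v, y⟫ * f y * Real.exp (-‖y‖ ^ 2))) := by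
    rw [(hasFDerivAt_exp_neg_norm_sq y).fderiv]
    simp [real_inner_comm]
    ring
  have hparts := integral_mul_fderiv_eq_neg_fderiv_mul_of_integrable (μ := μ)
    (f := f) (g := fun y ↦ Real.exp (-‖y‖ ^ 2)) (v := v)
    ((hf.fderiv_apply v).integrable_mul_exp_neg_norm_sq (by fun_prop))
    (by simpa only [hderiv] using
      (((hf.inner_mul v).integrable_mul_exp_neg_norm_sq (by fun_prop)).const_mul 2).fun_neg)
    (hf.integrable_mul_exp_neg_norm_sq hd.continuous)
    (fun y _ ↦ hd.differentiable one_ne_zero y)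
    (fun y _ ↦ (hasFDerivAt_exp_neg_norm_sq y).differentiableAt)
  simpa only [hderiv, integral_neg, integral_const_mul, neg_inj] using hparts

end Gaussian

section Sphere

variable {E : Type*} [NormedAddCommGroup E] [InnerProductSpace ℝ E] [FiniteDimensional ℝ E]
  [Nontrivial E] [MeasurableSpace E] [BorelSpace E] {μ : Measure E} [μ.IsAddHaarMeasure]
  {k : ℕ} {f : E → ℝ}

theorem IsPosHomogeneous.integral_toSphere_inner_mul (hf : IsPosHomogeneous (k + 1) f)
    (hd : ContDiff ℝ 1 f) (v : E) :
    (finrank ℝ E + k) * ∫ y : sphere (0 : E) 1, ⟪v, y⟫ * f y ∂μ.toSphere =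
      ∫ y : sphere (0 : E) 1, fderiv ℝ f y v ∂μ.toSphere := by
  set m := finrank ℝ E - 1 + k with hm
  have hcast : (finrank ℝ E + k : ℝ) = m + 1 := by
    have : finrank ℝ E + k = m + 1 := by have := Module.finrank_pos (R := ℝ) (M := E); omega
    exact_mod_cast this
  have hgauss := hf.two_mul_integral_inner_mul_exp_neg_norm_sq (μ := μ) hd v
  rw [(hf.inner_mul v).integral_mul_fun_norm fun r ↦ Real.exp (-r ^ 2),
    (hf.fderiv_apply v).integral_mul_fun_norm
      fun r ↦ Real.exp (-r ^ 2), add_assoc k, ← add_assoc, ← hm, mul_left_comm,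
    two_mul_integral_pow_add_two_mul_exp_neg_sq, ← mul_assoc] at hgauss
  rw [hcast, mul_comm]
  exact mul_right_cancel₀ (integral_pow_mul_exp_neg_sq_pos m).ne' hgauss

lemma IsPosHomogeneous.integral_toSphere_inner_mul_clm_mul (hf : IsPosHomogeneous k f)
    (hd : ContDiff ℝ 1 f) (v : E) (φ : E →L[ℝ] ℝ) :
    (finrank ℝ E + k) * ∫ y : sphere (0 : E) 1, ⟪v, y⟫ * (φ y * f y) ∂μ.toSphere =
      φ v * ∫ y : sphere (0 : E) 1, f y ∂μ.toSphere +
        ∫ y : sphere (0 : E) 1, φ y * fderiv ℝ f y v ∂μ.toSphere := by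
  have hleibniz (y : E) :
      fderiv ℝ (fun y ↦ φ y * f y) y v = φ v * f y + φ y * fderiv ℝ f y v := by
    rw [fderiv_fun_mul φ.differentiableAt (hd.differentiable one_ne_zero _)]
    simp [mul_comm, add_comm]
  have hhom : IsPosHomogeneous (k + 1) (fun y ↦ φ y * f y) := hf.linearMap_mul (φ : E →ₗ[ℝ] ℝ)
  rw [hhom.integral_toSphere_inner_mul (φ.contDiff.mul hd)]
  simp_rw [hleibniz]
  rw [integral_add, integral_const_mul]
  · exact integrable_toSphere_of_continuous (f := fun y ↦ φ v * f y) (by fun_prop)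
  · exact integrable_toSphere_of_continuous (f := fun y ↦ φ y * fderiv ℝ f y v) (by fun_prop)

/-- The field `y ↦ f y • A y` has divergence `tr A * f y + Df(y)(A y)`. -/
theorem IsPosHomogeneous.integral_toSphere_inner_map_mul (hf : IsPosHomogeneous k f)
    (hd : ContDiff ℝ 1 f) (A : E →ₗ[ℝ] E) :
    (finrank ℝ E + k) * ∫ y : sphere (0 : E) 1, ⟪A y, y⟫ * f y ∂μ.toSphere =
      trace ℝ E A * ∫ y : sphere (0 : E) 1, f y ∂μ.toSphere +
        ∫ y : sphere (0 : E) 1, fderiv ℝ f y (A y) ∂μ.toSphere := by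
  let b := stdOrthonormalBasis ℝ E
  let φ (i) : E →L[ℝ] ℝ := (innerₗ E (b i) ∘ₗ A).toContinuousLinearMap
  have hφ (i) (y : E) : φ i y = ⟪b i, A y⟫ := rfl
  have hinner (y : E) : ⟪A y, y⟫ * f y = ∑ i, ⟪b i, y⟫ * (φ i y * f y) := by
    rw [← b.sum_inner_mul_inner (A y) y, Finset.sum_mul]
    exact Finset.sum_congr rfl fun i _ ↦ by rw [hφ, real_inner_comm]; ring
  have hfderiv (y : E) : fderiv ℝ f y (A y) = ∑ i, φ i y * fderiv ℝ f y (b i) := by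
    conv_lhs => rw [← b.sum_repr' (A y)]
    simp only [map_sum, map_smul, smul_eq_mul, hφ]
  simp_rw [hinner, hfderiv]
  rw [integral_finsetSum, integral_finsetSum, Finset.mul_sum, LinearMap.trace_eq_sum_inner A b,
    Finset.sum_mul, ← Finset.sum_add_distrib]
  · exact Finset.sum_congr rfl fun i _ ↦ hf.integral_toSphere_inner_mul_clm_mul hd (b i) (φ i)
  · exact fun i _ ↦ integrable_toSphere_of_continuous (f := fun y ↦ φ i y * fderiv ℝ f y (b i))
      (by fun_prop)
  · exact fun i _ ↦ integrable_toSphere_of_continuous (f := fun y ↦ ⟪b i, y⟫ * (φ i y * f y))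
      (by fun_prop)

end Sphere

section QuadraticForms

variable {E : Type*} [NormedAddCommGroup E] [InnerProductSpace ℝ E]

lemma isPosHomogeneous_inner_map_self (A : E →ₗ[ℝ] E) :
    IsPosHomogeneous 2 (fun y ↦ ⟪A y, y⟫) := by
  intro r _ y
  simp only [map_smul, real_inner_smul_left, real_inner_smul_right]
  ring

variable [FiniteDimensional ℝ E] {A B : E →ₗ[ℝ] E}

lemma contDiff_inner_map_self (A : E →ₗ[ℝ] E) : ContDiff ℝ 1 (fun y ↦ ⟪A y, y⟫) :=
  A.toContinuousLinearMap.contDiff.inner ℝ contDiff_id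

lemma fderiv_inner_map_self_of_isSymmetric (hA : A.IsSymmetric) (y v : E) :
    fderiv ℝ (fun y ↦ ⟪A y, y⟫) y v = 2 * ⟪A v, y⟫ := by
  have hleibniz : fderiv ℝ (fun y ↦ ⟪A y, y⟫) y v = ⟪A y, v⟫ + ⟪A v, y⟫ := by
    have hd := fderiv_inner_apply ℝ A.toContinuousLinearMap.differentiableAt
      (differentiableAt_id (x := y)) v
    rw [A.toContinuousLinearMap.fderiv, fderiv_id] at hd
    exact hd
  rw [hleibniz, hA y v, real_inner_comm, two_mul]

variable [Nontrivial E] [MeasurableSpace E] [BorelSpace E] {μ : Measure E} [μ.IsAddHaarMeasure]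

theorem integral_toSphere_inner_map_self (A : E →ₗ[ℝ] E) :
    finrank ℝ E * ∫ y : sphere (0 : E) 1, ⟪A y, y⟫ ∂μ.toSphere =
      μ.toSphere.real univ * trace ℝ E A := by
  simpa [mul_comm] using (isPosHomogeneous_const (E := E) 1).integral_toSphere_inner_map_mul
    (μ := μ) contDiff_const A

theorem integral_toSphere_inner_map_self_mul (A : E →ₗ[ℝ] E) (hB : B.IsSymmetric) :
    finrank ℝ E * (finrank ℝ E + 2) *
        ∫ y : sphere (0 : E) 1, ⟪A y, y⟫ * ⟪B y, y⟫ ∂μ.toSphere =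
      μ.toSphere.real univ * (trace ℝ E A * trace ℝ E B +
        2 * trace ℝ E (B * A)) := by
  have hstep := (isPosHomogeneous_inner_map_self B).integral_toSphere_inner_map_mul (μ := μ)
    (contDiff_inner_map_self B) A
  have hfderiv (y : E) : fderiv ℝ (fun y ↦ ⟪B y, y⟫) y (A y) = 2 * ⟪(B * A) y, y⟫ :=
    fderiv_inner_map_self_of_isSymmetric hB y (A y)
  simp_rw [hfderiv, integral_const_mul] at hstep
  linear_combination (finrank ℝ E : ℝ) * hstep +
    trace ℝ E A * integral_toSphere_inner_map_self (μ := μ) B +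
    2 * integral_toSphere_inner_map_self (μ := μ) (B * A)

theorem integral_toSphere_inner_map_self_mul_mul (hA : A.IsSymmetric) (hB : B.IsSymmetric)
    (C : E →ₗ[ℝ] E) :
    finrank ℝ E * (finrank ℝ E + 2) * (finrank ℝ E + 4) *
        ∫ y : sphere (0 : E) 1, ⟪C y, y⟫ * (⟪A y, y⟫ * ⟪B y, y⟫) ∂μ.toSphere =
      μ.toSphere.real univ *
        (trace ℝ E C * trace ℝ E A * trace ℝ E B +
          2 * (trace ℝ E C * trace ℝ E (B * A) +
            trace ℝ E B * trace ℝ E (A * C) +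
            trace ℝ E A * trace ℝ E (B * C)) +
          4 * (trace ℝ E (B * (A * C)) + trace ℝ E (A * (B * C)))) := by
  have hstep := ((isPosHomogeneous_inner_map_self A).mul
    (isPosHomogeneous_inner_map_self B)).integral_toSphere_inner_map_mul (μ := μ)
    ((contDiff_inner_map_self A).mul (contDiff_inner_map_self B)) C
  have hfderiv (y : E) : fderiv ℝ (fun y ↦ ⟪A y, y⟫ * ⟪B y, y⟫) y (C y) =
      2 * (⟪(A * C) y, y⟫ * ⟪B y, y⟫) + 2 * (⟪(B * C) y, y⟫ * ⟪A y, y⟫) := by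
    rw [fderiv_fun_mul ((contDiff_inner_map_self A).differentiable one_ne_zero y)
      ((contDiff_inner_map_self B).differentiable one_ne_zero y)]
    simp only [add_apply, smul_apply, smul_eq_mul, fderiv_inner_map_self_of_isSymmetric hA,
      fderiv_inner_map_self_of_isSymmetric hB, Module.End.mul_apply]
    ring
  have hint (A B : E →ₗ[ℝ] E) :
      Integrable (fun y : sphere (0 : E) 1 ↦ 2 * (⟪A y, y⟫ * ⟪B y, y⟫)) μ.toSphere :=
    integrable_toSphere_of_continuous (f := fun y : E ↦ 2 * (⟪A y, y⟫ * ⟪B y, y⟫))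
      (((contDiff_inner_map_self A).continuous.mul
        (contDiff_inner_map_self B).continuous).const_mul 2)
  simp_rw [hfderiv] at hstep
  rw [integral_add (hint _ _) (hint _ _), integral_const_mul, integral_const_mul] at hstep
  push_cast at hstep
  linear_combination (finrank ℝ E : ℝ) * (finrank ℝ E + 2) * hstep +
    trace ℝ E C * integral_toSphere_inner_map_self_mul (μ := μ) A hB +
    2 * integral_toSphere_inner_map_self_mul (μ := μ) (A * C) hB +
    2 * integral_toSphere_inner_map_self_mul (μ := μ) (B * C) hA

end QuadraticForms

section Matrices

variable {ι : Type*} [Fintype ι] [DecidableEq ι] {M : Matrix ι ι ℝ}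

lemma inner_toEuclideanLin_self (M : Matrix ι ι ℝ) (y : EuclideanSpace ℝ ι) :
    ⟪toEuclideanLin M y, y⟫ = ∑ i, ∑ j, M i j * y i * y j := by
  simp only [PiLp.inner_apply, Matrix.toLpLin_apply, Matrix.mulVec, dotProduct, RCLike.inner_apply,
    conj_trivial, Finset.mul_sum]
  exact Finset.sum_congr rfl fun i _ ↦ Finset.sum_congr rfl fun j _ ↦ by ring

lemma inner_toEuclideanLin_single_self (p q : ι) (y : EuclideanSpace ℝ ι) :
    ⟪toEuclideanLin (Matrix.single p q 1) y, y⟫ = y p * y q := by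
  simp [inner_toEuclideanLin_self, Matrix.single_apply, ite_and]

lemma trace_toEuclideanLin (M : Matrix ι ι ℝ) :
    trace ℝ _ (toEuclideanLin M) = M.trace := by
  rw [toEuclideanLin, Matrix.toLpLin_eq_toLin, Matrix.trace_toLin_eq]

lemma toEuclideanLin_mul (M L : Matrix ι ι ℝ) :
    toEuclideanLin (M * L) = toEuclideanLin M * toEuclideanLin L :=
  Matrix.toLpLin_mul_same 2 M L

lemma isSymmetric_toEuclideanLin_of_isSymm (hM : M.IsSymm) :
    (toEuclideanLin M).IsSymmetric :=
  Matrix.isSymmetric_toEuclideanLin_iff.2 <| by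
    rwa [Matrix.IsHermitian, Matrix.conjTranspose_eq_transpose_of_trivial]

variable [Nonempty ι] {μ : Measure (EuclideanSpace ℝ ι)} [μ.IsAddHaarMeasure]

theorem integral_toSphere_toEuclideanLin_mul (hM : M.IsSymm) (hM0 : M.trace = 0)
    (L : Matrix ι ι ℝ) :
    ∫ y : sphere (0 : EuclideanSpace ℝ ι) 1,
        ⟪toEuclideanLin L y, y⟫ * ⟪toEuclideanLin M y, y⟫ ∂μ.toSphere =
      2 * μ.toSphere.real univ / (Fintype.card ι * (Fintype.card ι + 2)) *
        ∑ i, ∑ j, L i j * M i j := by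
  have hmoment := integral_toSphere_inner_map_self_mul (μ := μ) (toEuclideanLin L)
    (isSymmetric_toEuclideanLin_of_isSymm hM)
  have htrace : (M * L).trace = ∑ i, ∑ j, L i j * M i j := by
    rw [Matrix.trace_mul_comm]
    simp only [Matrix.trace, Matrix.diag, Matrix.mul_apply, hM.apply]
  rw [← toEuclideanLin_mul, trace_toEuclideanLin, trace_toEuclideanLin, trace_toEuclideanLin, hM0,
    htrace, finrank_euclideanSpace] at hmoment
  field_simp
  linear_combination hmoment

theorem integral_toSphere_toEuclideanLin_sq_mul_mul (hM : M.IsSymm) (hM0 : M.trace = 0) (p q : ι) :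
    ∫ y : sphere (0 : EuclideanSpace ℝ ι) 1,
        ⟪toEuclideanLin M y, y⟫ ^ 2 * y.1 p * y.1 q ∂μ.toSphere =
      8 * μ.toSphere.real univ /
          (Fintype.card ι * (Fintype.card ι + 2) * (Fintype.card ι + 4)) *
            ∑ k, M k p * M k q +
        2 * μ.toSphere.real univ /
          (Fintype.card ι * (Fintype.card ι + 2) * (Fintype.card ι + 4)) *
            (∑ k, ∑ l, M k l ^ 2) * (if p = q then 1 else 0) := by
  have hmoment := integral_toSphere_inner_map_self_mul_mul (μ := μ)
    (isSymmetric_toEuclideanLin_of_isSymm hM) (isSymmetric_toEuclideanLin_of_isSymm hM)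
    (toEuclideanLin (Matrix.single p q 1))
  have hsq : (M * M).trace = ∑ k, ∑ l, M k l ^ 2 := by
    simp only [Matrix.trace, Matrix.diag, Matrix.mul_apply, hM.apply, sq]
  have hentry : (M * (M * Matrix.single p q 1)).trace = ∑ k, M k p * M k q := by
    rw [← Matrix.mul_assoc, Matrix.trace_mul_single]
    simp only [Matrix.mul_apply, hM.apply, mul_comm, MulOpposite.op_one, one_smul]
  have hsingle : (Matrix.single p q (1 : ℝ)).trace = if p = q then 1 else 0 := by
    simp [Matrix.trace, Matrix.single_apply, ite_and, eq_comm]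
  simp only [← toEuclideanLin_mul, trace_toEuclideanLin, inner_toEuclideanLin_single_self, hM0,
    hsq, hentry, hsingle, finrank_euclideanSpace] at hmoment
  have hintegrand (y : EuclideanSpace ℝ ι) : ⟪toEuclideanLin M y, y⟫ ^ 2 * y p * y q =
      y p * y q * (⟪toEuclideanLin M y, y⟫ * ⟪toEuclideanLin M y, y⟫) := by ring
  apply mul_left_cancel₀
    (show (Fintype.card ι * (Fintype.card ι + 2) * (Fintype.card ι + 4) : ℝ) ≠ 0 by positivity)
  simp_rw [hintegrand]
  rw [hmoment]
  field_simp
  ring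

end Matrices

section Weyl

/-- The matrix of `y ↦ 2 H_{ij}(y)`, `H_{ij}(y) = Σ_{a,b} W_{iajb} y_a y_b`, as a quadratic form. -/
def weylMatrix {ι : Type*} (W : ι → ι → ι → ι → ℝ) (i j : ι) : Matrix ι ι ℝ :=
  Matrix.of fun a b ↦ W i a j b + W i b j a

lemma isSymm_weylMatrix {ι : Type*} (W : ι → ι → ι → ι → ℝ) (i j : ι) :
    (weylMatrix W i j).IsSymm :=
  Matrix.IsSymm.ext fun _ _ ↦ add_comm _ _

lemma trace_weylMatrix {ι : Type*} [Fintype ι] {W : ι → ι → ι → ι → ℝ} {i j : ι}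
    (hW : ∑ a, W i a j a = 0) : (weylMatrix W i j).trace = 0 := by
  simp [Matrix.trace, weylMatrix, Finset.sum_add_distrib, hW]

variable {N : ℕ} {W : Fin N → Fin N → Fin N → Fin N → ℝ}

lemma two_mul_Hmat (i j : Fin N) (y : EuclideanSpace ℝ (Fin N)) :
    2 * Hmat N W i j y = ⟪toEuclideanLin (weylMatrix W i j) y, y⟫ := by
  rw [inner_toEuclideanLin_self]
  simp only [weylMatrix, Matrix.of_apply, add_mul, Finset.sum_add_distrib]
  rw [two_mul, Hmat]
  congr 1
  rw [Finset.sum_comm]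
  exact Finset.sum_congr rfl fun i _ ↦ Finset.sum_congr rfl fun j _ ↦ mul_right_comm _ _ _

lemma continuous_Hmat (i j : Fin N) : Continuous (Hmat N W i j) := by
  unfold Hmat
  fun_prop

lemma integral_Hmat_sq_mul_mul (i j p q : Fin N) (hW : ∑ a, W i a j a = 0) :
    ∫ y, Hmat N W i j y.1 ^ 2 * y.1 p * y.1 q ∂sphereMeasure N =
      2 * sphereArea N / (N * (N + 2) * (N + 4)) *
          ∑ k, (W i k j p + W i p j k) * (W i k j q + W i q j k) +
        sphereArea N / (2 * N * (N + 2) * (N + 4)) * (∑ k, ∑ l, (W i k j l + W i l j k) ^ 2) *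
          (if p = q then 1 else 0) := by
  have : Nonempty (Fin N) := ⟨p⟩
  have hmoment := integral_toSphere_toEuclideanLin_sq_mul_mul (μ := volume)
    (isSymm_weylMatrix W i j) (trace_weylMatrix hW) p q
  have hintegrand (y : EuclideanSpace ℝ (Fin N)) : Hmat N W i j y ^ 2 * y p * y q =
      1 / 4 * (⟪toEuclideanLin (weylMatrix W i j) y, y⟫ ^ 2 * y p * y q) := by
    rw [← two_mul_Hmat]
    ring
  simp_rw [hintegrand, integral_const_mul]
  rw [sphereMeasure, hmoment]
  simp only [weylMatrix, Matrix.of_apply, Fintype.card_fin, sphereArea, sphereMeasure, Measure.real]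
  field_simp
  ring

lemma integral_Hmat_mul_Hmat (i j i' j' : Fin N) (hW : ∑ a, W i' a j' a = 0) :
    ∫ y, Hmat N W i j y.1 * Hmat N W i' j' y.1 ∂sphereMeasure N =
      sphereArea N / (2 * N * (N + 2)) *
        ∑ a, ∑ b, (W i a j b + W i b j a) * (W i' a j' b + W i' b j' a) := by
  have : Nonempty (Fin N) := ⟨i⟩
  have hmoment := integral_toSphere_toEuclideanLin_mul (μ := volume)
    (isSymm_weylMatrix W i' j') (trace_weylMatrix hW) (weylMatrix W i j)
  have hintegrand (y : EuclideanSpace ℝ (Fin N)) : Hmat N W i j y * Hmat N W i' j' y =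
      1 / 4 * (⟪toEuclideanLin (weylMatrix W i j) y, y⟫ *
        ⟪toEuclideanLin (weylMatrix W i' j') y, y⟫) := by
    rw [← two_mul_Hmat, ← two_mul_Hmat]
    ring
  simp_rw [hintegrand, integral_const_mul]
  rw [sphereMeasure, hmoment]
  simp only [weylMatrix, Matrix.of_apply, Fintype.card_fin, sphereArea, sphereMeasure, Measure.real]
  field_simp
  ring

theorem integral_sum_Hmat_sq_mul_mul (hW : ∀ i j, ∑ a, W i a j a = 0) (p q : Fin N) :
    ∫ y, (∑ i, ∑ j, Hmat N W i j y.1 ^ 2) * y.1 p * y.1 q ∂sphereMeasure N =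
      2 * sphereArea N / (N * (N + 2) * (N + 4)) *
          (∑ i, ∑ j, ∑ k, (W i k j p + W i p j k) * (W i k j q + W i q j k)) +
        sphereArea N / (2 * N * (N + 2) * (N + 4)) *
          (∑ i, ∑ j, ∑ k, ∑ l, (W i k j l + W i l j k) ^ 2) * (if p = q then 1 else 0) := by
  have hint (i j) : Integrable (fun y ↦ Hmat N W i j y.1 ^ 2 * y.1 p * y.1 q) (sphereMeasure N) :=
    integrable_toSphere_of_continuous (f := fun y ↦ Hmat N W i j y ^ 2 * y p * y q)
      (by have := continuous_Hmat (W := W) i j; fun_prop)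
  have hsum : ∫ y, (∑ i, ∑ j, Hmat N W i j y.1 ^ 2) * y.1 p * y.1 q ∂sphereMeasure N =
      ∑ i, ∑ j, ∫ y, Hmat N W i j y.1 ^ 2 * y.1 p * y.1 q ∂sphereMeasure N := by
    simp_rw [Finset.sum_mul]
    rw [integral_finsetSum _ fun i _ ↦ integrable_finsetSum _ fun j _ ↦ hint i j]
    exact Finset.sum_congr rfl fun i _ ↦ integral_finsetSum _ fun j _ ↦ hint i j
  simp_rw [hsum, fun i j ↦ integral_Hmat_sq_mul_mul i j p q (hW i j),
    Finset.sum_add_distrib, Finset.mul_sum, Finset.sum_mul]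

theorem integral_sum_Hmat_mul_Hmat (hflip : ∀ i p j q, W i p j q = W p i q j)
    (hswap : ∀ i p j q, W i p j q = W j q i p) (hW : ∀ i j, ∑ a, W i a j a = 0) (p q : Fin N) :
    ∫ y, ∑ t, Hmat N W p t y.1 * Hmat N W q t y.1 ∂sphereMeasure N =
      sphereArea N / (2 * N * (N + 2)) *
        ∑ i, ∑ j, ∑ k, (W i k j p + W i p j k) * (W i k j q + W i q j k) := by
  have hint (t) : Integrable (fun y ↦ Hmat N W p t y.1 * Hmat N W q t y.1) (sphereMeasure N) :=
    integrable_toSphere_of_continuous (f := fun y ↦ Hmat N W p t y * Hmat N W q t y)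
      ((continuous_Hmat p t).mul (continuous_Hmat q t))
  have hreindex : ∑ t, ∑ a, ∑ b, (W p a t b + W p b t a) * (W q a t b + W q b t a) =
      ∑ i, ∑ j, ∑ k, (W i k j p + W i p j k) * (W i k j q + W i q j k) := by
    have hentry (i j k r : Fin N) : W r i k j + W r j k i = W i k j r + W i r j k := by
      rw [hflip r i k j, hswap r j k i, hflip k i r j, add_comm]
    rw [Finset.sum_comm]
    refine Finset.sum_congr rfl fun i _ ↦ ?_
    rw [Finset.sum_comm]
    exact Finset.sum_congr rfl fun j _ ↦ Finset.sum_congr rfl fun k _ ↦ by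
      rw [hentry i j k p, hentry i j k q]
  rw [integral_finsetSum _ fun t _ ↦ hint t, ← hreindex, Finset.mul_sum]
  exact Finset.sum_congr rfl fun t _ ↦ integral_Hmat_mul_Hmat p t q t (hW q t)

end Weyl

theorem stmt_5_general (N : ℕ) (W : Fin N → Fin N → Fin N → Fin N → ℝ)
    (hflip : ∀ i p j q, W i p j q = W p i q j) (hswap : ∀ i p j q, W i p j q = W j q i p)
    (hTrace : ∀ p q, ∑ i : Fin N, W i p i q = 0) (p q : Fin N) :
    (∫ y, (∑ i, ∑ j, Hmat N W i j y.1 ^ 2) * y.1 p * y.1 q ∂sphereMeasure N =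
      2 * sphereArea N / (N * (N + 2) * (N + 4)) *
          (∑ i, ∑ j, ∑ k, (W i k j p + W i p j k) * (W i k j q + W i q j k)) +
        sphereArea N / (2 * N * (N + 2) * (N + 4)) *
          (∑ i, ∑ j, ∑ k, ∑ l, (W i k j l + W i l j k) ^ 2) * (if p = q then 1 else 0)) ∧
    ∫ y, ∑ t, Hmat N W p t y.1 * Hmat N W q t y.1 ∂sphereMeasure N =
      sphereArea N / (2 * N * (N + 2)) *
        ∑ i, ∑ j, ∑ k, (W i k j p + W i p j k) * (W i k j q + W i q j k) := by
  have htrace (i j) : ∑ a, W i a j a = 0 := by simp_rw [hflip i, hTrace]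
  exact ⟨integral_sum_Hmat_sq_mul_mul htrace p q,
    integral_sum_Hmat_mul_Hmat hflip hswap htrace p q⟩

theorem stmt_5 (N : ℕ) (hN : 5 ≤ N)
    (W : Fin N → Fin N → Fin N → Fin N → ℝ)
    (hW1 : ∀ i p j q, W i p j q = - W p i j q)
    (hW2 : ∀ i p j q, W i p j q = - W i p q j)
    (hW3 : ∀ i p j q, W i p j q = W j q i p)
    (hBianchi : ∀ i p j q, W i p j q + W i j q p + W i q p j = 0)
    (hTrace : ∀ p q, ∑ i : Fin N, W i p i q = 0) :
    ∀ p q : Fin N,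
    (∫ y : Metric.sphere (0 : EuclideanSpace ℝ (Fin N)) 1,
        (∑ i : Fin N, ∑ j : Fin N, (Hmat N W i j ↑y) ^ 2) * ((y : EuclideanSpace ℝ (Fin N)) p) * ((y : EuclideanSpace ℝ (Fin N)) q)
          ∂(sphereMeasure N)
      = 2 * sphereArea N / (N * (N + 2) * (N + 4))
          * (∑ i : Fin N, ∑ j : Fin N, ∑ k : Fin N,
              (W i k j p + W i p j k) * (W i k j q + W i q j k))
        + sphereArea N / (2 * N * (N + 2) * (N + 4))
          * (∑ i : Fin N, ∑ j : Fin N, ∑ k : Fin N, ∑ l : Fin N,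
              (W i k j l + W i l j k) ^ 2)
          * (if p = q then (1 : ℝ) else 0)) ∧
    (∫ y : Metric.sphere (0 : EuclideanSpace ℝ (Fin N)) 1,
        (∑ t : Fin N, Hmat N W p t ↑y * Hmat N W q t ↑y) ∂(sphereMeasure N)
      = sphereArea N / (2 * N * (N + 2))
          * ∑ i : Fin N, ∑ j : Fin N, ∑ k : Fin N,
              (W i k j p + W i p j k) * (W i k j q + W i q j k)) := by
  exact stmt_5_general N W (fun i p j q ↦ by rw [hW1, hW2, neg_neg]) hW3 hTrace
end
end

section
/- For all p, q ∈ {1,…,N}: (i) ∫_{∂B₁} Σ_{i,j,k=1}^N ((∂_k H_{ij})(y))² y_p y_q dσ(y) = (2|S^{N−1}|/(N(N+2))) Σ_{i,j,k=1}^N (W_{ikjp}+W_{ipjk})(W_{ikjq}+W_{iqjk}) + (|S^{N−1}|/(N(N+2))) (Σ_{i,j,k,ℓ=1}^N (W_{ikjℓ}+W_{iℓjk})²) δ_{pq}; and (ii) ∫_{∂B₁} Σ_{i,j=1}^N (∂_p H_{ij})(y) (∂_q H_{ij})(y) dσ(y) = (|S^{N−1}|/N) Σ_{i,j,k=1}^N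 (W_{ikjp}+W_{ipjk})(W_{ikjq}+W_{iqjk}). -/
open scoped BigOperators
open MeasureTheory

noncomputable section

/-! The partial derivatives `∂_k H_{ij}` are linear forms with coefficients `W i k j l + W i l j k`,
so both integrals are sums of integrals of products of linear forms over the sphere. A moment
`∫ ⟪u, y⟫ ^ k` is a multiple of `‖u‖ ^ k` because reflections preserve the surface measure;
polarization then gives the integral of any product of two or four linear forms up to a constant,
and the constant is found by summing over an orthonormal basis, since `‖y‖ = 1` on the sphere. -/

open Metric Module
open scoped Pointwise RealInnerProductSpace

section UnitSphere

variable {E F : Type*} [NormedAddCommGroup E] [NormedSpace ℝ E] [NormedAddCommGroup F]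
  [NormedSpace ℝ F]

/-- The homeomorphism between unit spheres induced by a linear isometry. -/
def unitSphereHomeomorph (L : E ≃ₗᵢ[ℝ] F) : sphere (0 : E) 1 ≃ₜ sphere (0 : F) 1 :=
  L.toHomeomorph.subtype (by simp)

@[simp]
lemma coe_unitSphereHomeomorph (L : E ≃ₗᵢ[ℝ] F) (y : sphere (0 : E) 1) :
    (unitSphereHomeomorph L y : F) = L y := rfl

lemma image_smul_coe_preimage_unitSphereHomeomorph (L : E ≃ₗᵢ[ℝ] F) (t : Set ℝ)
    (s : Set (sphere (0 : F) 1)) :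
    L '' (t • ((↑) '' (unitSphereHomeomorph L ⁻¹' s) : Set E)) = t • ((↑) '' s : Set F) := by
  have hcoe : L '' ((↑) '' (unitSphereHomeomorph L ⁻¹' s)) = ((↑) '' s : Set F) := by
    conv_rhs => rw [← (unitSphereHomeomorph L).image_preimage s]
    simp only [Set.image_image, coe_unitSphereHomeomorph]
  rw [← hcoe]
  exact Set.image_image2_distrib_right L.map_smul

lemma measurePreserving_unitSphereHomeomorph [MeasurableSpace E] [BorelSpace E]
    [MeasurableSpace F] [BorelSpace F] {μ : Measure E} {ν : Measure F} {L : E ≃ₗᵢ[ℝ] F}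
    (hL : MeasurePreserving L μ ν) :
    MeasurePreserving (unitSphereHomeomorph L) μ.toSphere ν.toSphere := by
  have hmeas := (unitSphereHomeomorph L).continuous.measurable
  refine ⟨hmeas, Measure.ext fun s hs ↦ ?_⟩
  rw [Measure.map_apply hmeas hs, Measure.toSphere_apply' _ hs,
    Measure.toSphere_apply' _ (hmeas hs), L.toLinearEquiv.finrank_eq,
    ← hL.measure_preimage_emb L.toHomeomorph.measurableEmbedding,
    ← image_smul_coe_preimage_unitSphereHomeomorph L, Set.preimage_image_eq _ L.injective]

end UnitSphere

lemma integrable_of_continuous {X G : Type*} [TopologicalSpace X] [CompactSpace X]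
    [MeasurableSpace X] [OpensMeasurableSpace X] [NormedAddCommGroup G] {μ : Measure X}
    [IsFiniteMeasureOnCompacts μ] {f : X → G} (hf : Continuous f) : Integrable f μ :=
  hf.integrable_of_hasCompactSupport (.of_compactSpace f)

lemma sum_sq_inner_coe_sphere {E ι : Type*} [NormedAddCommGroup E] [InnerProductSpace ℝ E]
    [Fintype ι] (b : OrthonormalBasis ι ℝ E) (y : sphere (0 : E) 1) :
    ∑ i, ⟪b i, (y : E)⟫ ^ 2 = 1 := by
  rw [b.sum_sq_inner_right, norm_eq_of_mem_sphere, one_pow]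

section Moments

variable {E : Type*} [NormedAddCommGroup E] [InnerProductSpace ℝ E] [FiniteDimensional ℝ E]
  [MeasurableSpace E] [BorelSpace E]

local notation "σ" => Measure.toSphere (volume : Measure E)

/-- The `k`-th moment, in the direction `u`, of the surface measure of the unit sphere. -/
def sphereMoment (k : ℕ) (u : E) : ℝ :=
  ∫ y : sphere (0 : E) 1, ⟪u, y⟫ ^ k ∂σ

lemma sphereMoment_congr_norm (k : ℕ) {u v : E} (h : ‖u‖ = ‖v‖) :
    sphereMoment k u = sphereMoment k v := by
  let L := (ℝ ∙ (u - v))ᗮ.reflection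
  have hLu : L u = v := Submodule.reflection_sub h
  have hL := measurePreserving_unitSphereHomeomorph L.measurePreserving
  calc
    sphereMoment k u = ∫ y : sphere (0 : E) 1, ⟪L u, L y⟫ ^ k ∂σ := by
      simp only [sphereMoment, L.inner_map_map]
    _ = sphereMoment k v := by
      rw [hLu]
      exact hL.integral_comp (unitSphereHomeomorph L).measurableEmbedding
        fun y ↦ ⟪v, (y : E)⟫ ^ k

lemma sphereMoment_smul (k : ℕ) (r : ℝ) (u : E) :
    sphereMoment k (r • u) = r ^ k * sphereMoment k u := by
  simp only [sphereMoment, real_inner_smul_left, mul_pow, integral_const_mul]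

lemma sphereMoment_eq_norm_pow_mul (k : ℕ) {e : E} (he : ‖e‖ = 1) (u : E) :
    sphereMoment k u = ‖u‖ ^ k * sphereMoment k e := by
  rw [← sphereMoment_smul]
  exact sphereMoment_congr_norm k (by simp [norm_smul, he])

lemma sphereMoment_two (u : E) :
    sphereMoment 2 u = Measure.real σ Set.univ / finrank ℝ E * ‖u‖ ^ 2 := by
  rcases subsingleton_or_nontrivial E with _ | _
  · simp [sphereMoment, Subsingleton.elim u 0]
  have hn : (finrank ℝ E : ℝ) ≠ 0 := mod_cast finrank_pos.ne'
  let b := stdOrthonormalBasis ℝ E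
  have hsum : finrank ℝ E * sphereMoment 2 u = ‖u‖ ^ 2 * Measure.real σ Set.univ := calc
    finrank ℝ E * sphereMoment 2 u = ∑ i, ‖u‖ ^ 2 * sphereMoment 2 (b i) := by
      simp only [← sphereMoment_eq_norm_pow_mul 2 (b.norm_eq_one _), Finset.sum_const,
        Finset.card_univ, Fintype.card_fin, nsmul_eq_mul]
    _ = ‖u‖ ^ 2 * ∫ y : sphere (0 : E) 1, ∑ i, ⟪b i, y⟫ ^ 2 ∂σ := by
      rw [integral_finsetSum _ fun i _ ↦ integrable_of_continuous (by fun_prop), Finset.mul_sum]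
      simp only [sphereMoment]
    _ = ‖u‖ ^ 2 * Measure.real σ Set.univ := by
      simp only [sum_sq_inner_coe_sphere, integral_const, smul_eq_mul, mul_one]
  rw [div_mul_eq_mul_div, eq_div_iff hn, mul_comm, hsum, mul_comm]

lemma integral_inner_mul_inner_toSphere (a b : E) :
    ∫ y : sphere (0 : E) 1, ⟪a, y⟫ * ⟪b, y⟫ ∂σ =
      Measure.real σ Set.univ / finrank ℝ E * ⟪a, b⟫ := by
  have hpol : 4 * ∫ y : sphere (0 : E) 1, ⟪a, y⟫ * ⟪b, y⟫ ∂σ =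
      sphereMoment 2 (a + b) - sphereMoment 2 (a - b) := by
    rw [sphereMoment, sphereMoment, ← integral_const_mul,
      ← integral_sub (integrable_of_continuous (by fun_prop))
        (integrable_of_continuous (by fun_prop))]
    simp only [inner_add_left, inner_sub_left]
    congr with y
    ring
  rw [sphereMoment_two, sphereMoment_two, norm_add_sq_real, norm_sub_sq_real] at hpol
  linarith

-- Polarization: the signed fourth powers `⟪a ± b ± c ± d, y⟫ ^ 4` sum to `4! * 2 ^ 3` products.
lemma integral_four_inner_eq_sphereMoment_four (a b c d : E) :
    192 * ∫ y : sphere (0 : E) 1, ⟪a, y⟫ * ⟪b, y⟫ * ⟪c, y⟫ * ⟪d, y⟫ ∂σ =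
      sphereMoment 4 (a + b + c + d) - sphereMoment 4 (a + b + c - d)
        - sphereMoment 4 (a + b - c + d) + sphereMoment 4 (a + b - c - d)
        - sphereMoment 4 (a - b + c + d) + sphereMoment 4 (a - b + c - d)
        + sphereMoment 4 (a - b - c + d) - sphereMoment 4 (a - b - c - d) := by
  simp only [sphereMoment]
  rw [← integral_const_mul, ← integral_sub, ← integral_sub, ← integral_add, ← integral_sub,
    ← integral_add, ← integral_add, ← integral_sub]
  · simp only [inner_add_left, inner_sub_left]
    congr with y
    ring
  all_goals exact integrable_of_continuous (by fun_prop)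

lemma integral_four_inner_of_sphereMoment_four {K : ℝ}
    (hK : ∀ u : E, sphereMoment 4 u = 3 * K * ‖u‖ ^ 4) (a b c d : E) :
    ∫ y : sphere (0 : E) 1, ⟪a, y⟫ * ⟪b, y⟫ * ⟪c, y⟫ * ⟪d, y⟫ ∂σ =
      K * (⟪a, b⟫ * ⟪c, d⟫ + ⟪a, c⟫ * ⟪b, d⟫ + ⟪a, d⟫ * ⟪b, c⟫) := by
  have hpol := integral_four_inner_eq_sphereMoment_four a b c d
  have hnorm (u : E) : ‖u‖ ^ 4 = ⟪u, u⟫ ^ 2 := by rw [real_inner_self_eq_norm_sq]; ring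
  simp only [hK, hnorm, inner_add_left, inner_sub_left, inner_add_right, inner_sub_right,
    real_inner_comm a b, real_inner_comm a c, real_inner_comm a d, real_inner_comm b c,
    real_inner_comm b d, real_inner_comm c d] at hpol ⊢
  linarith

lemma sphereMoment_four (u : E) :
    sphereMoment 4 u =
      3 * (Measure.real σ Set.univ / (finrank ℝ E * (finrank ℝ E + 2))) * ‖u‖ ^ 4 := by
  rcases subsingleton_or_nontrivial E with _ | _
  · simp [sphereMoment, Subsingleton.elim u 0]
  obtain ⟨e, he⟩ := exists_norm_eq E zero_le_one
  obtain ⟨K, hK⟩ : ∃ K, ∀ v : E, sphereMoment 4 v = 3 * K * ‖v‖ ^ 4 :=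
    ⟨sphereMoment 4 e / 3, fun v ↦ by rw [sphereMoment_eq_norm_pow_mul 4 he]; ring⟩
  let b := stdOrthonormalBasis ℝ E
  -- `K` is found by inserting `1 = ∑ i, ⟪b i, y⟫ ^ 2` into the second moment.
  have hcontract : sphereMoment 2 e = K * (finrank ℝ E + 2) := calc
    sphereMoment 2 e = ∑ i, ∫ y : sphere (0 : E) 1, ⟪e, y⟫ * ⟪e, y⟫ * ⟪b i, y⟫ * ⟪b i, y⟫ ∂σ := by
      rw [← integral_finsetSum _ fun i _ ↦ integrable_of_continuous (by fun_prop)]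
      simp only [mul_assoc, ← Finset.mul_sum]
      simp only [← pow_two, sum_sq_inner_coe_sphere, mul_one, sphereMoment]
    _ = ∑ i, K * (1 + 2 * ⟪e, b i⟫ ^ 2) := by
      simp only [integral_four_inner_of_sphereMoment_four hK, real_inner_self_eq_norm_sq, he,
        b.norm_eq_one]
      congr! 2
      ring
    _ = K * (finrank ℝ E + 2) := by
      rw [← Finset.mul_sum, Finset.sum_add_distrib, ← Finset.mul_sum, b.sum_sq_inner_left, he]
      simp
  have hn2 : (finrank ℝ E + 2 : ℝ) ≠ 0 := by positivity
  rw [hK, ← div_div, eq_div_of_mul_eq hn2 hcontract.symm, sphereMoment_two, he, one_pow, mul_one]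

lemma integral_four_inner_toSphere (a b c d : E) :
    ∫ y : sphere (0 : E) 1, ⟪a, y⟫ * ⟪b, y⟫ * ⟪c, y⟫ * ⟪d, y⟫ ∂σ =
      Measure.real σ Set.univ / (finrank ℝ E * (finrank ℝ E + 2)) *
        (⟪a, b⟫ * ⟪c, d⟫ + ⟪a, c⟫ * ⟪b, d⟫ + ⟪a, d⟫ * ⟪b, c⟫) :=
  integral_four_inner_of_sphereMoment_four sphereMoment_four a b c d

lemma integral_sum_inner_mul_inner_toSphere {ι : Type*} [Fintype ι] (v w : ι → E) :
    ∫ y : sphere (0 : E) 1, ∑ s, ⟪v s, y⟫ * ⟪w s, y⟫ ∂σ =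
      Measure.real σ Set.univ / finrank ℝ E * ∑ s, ⟪v s, w s⟫ := by
  rw [integral_finsetSum _ fun s _ ↦ integrable_of_continuous (by fun_prop), Finset.mul_sum]
  simp only [integral_inner_mul_inner_toSphere]

lemma integral_sum_sq_inner_mul_inner_mul_inner_toSphere {ι : Type*} [Fintype ι] (v : ι → E)
    (a b : E) :
    ∫ y : sphere (0 : E) 1, (∑ s, ⟪v s, y⟫ ^ 2) * ⟪a, y⟫ * ⟪b, y⟫ ∂σ =
      Measure.real σ Set.univ / (finrank ℝ E * (finrank ℝ E + 2)) *
        (2 * ∑ s, ⟪v s, a⟫ * ⟪v s, b⟫ + (∑ s, ‖v s‖ ^ 2) * ⟪a, b⟫) := by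
  simp only [Finset.sum_mul, pow_two ⟪_, _⟫]
  rw [integral_finsetSum _ fun s _ ↦ integrable_of_continuous (by fun_prop), Finset.mul_sum,
    ← Finset.sum_add_distrib, Finset.mul_sum]
  congr! 1 with s
  rw [integral_four_inner_toSphere, real_inner_self_eq_norm_sq]
  ring

end Moments

section Gradient

variable {N : ℕ} (W : Fin N → Fin N → Fin N → Fin N → ℝ)

/-- The gradient of the linear form `∂_k H_{ij}`: its `l`-th entry is the constant
`∂_l ∂_k H_{ij}`, and the inner product with it evaluates `∂_k H_{ij}`. -/
def gradPdHmat (i j k : Fin N) : EuclideanSpace ℝ (Fin N) :=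
  WithLp.toLp 2 fun l ↦ W i k j l + W i l j k

lemma pd_Hmat (i j k : Fin N) (y : EuclideanSpace ℝ (Fin N)) :
    pd N k (Hmat N W i j) y = ⟪gradPdHmat W i j k, y⟫ := by
  have hcoord (p : Fin N) : HasFDerivAt (fun z : EuclideanSpace ℝ (Fin N) ↦ z p)
      (EuclideanSpace.proj p : EuclideanSpace ℝ (Fin N) →L[ℝ] ℝ) y :=
    (EuclideanSpace.proj p : EuclideanSpace ℝ (Fin N) →L[ℝ] ℝ).hasFDerivAt
  have hH : HasFDerivAt (Hmat N W i j) _ y :=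
    .fun_sum fun p _ ↦ .fun_sum fun q _ ↦ ((hcoord p).const_mul (W i p j q)).mul (hcoord q)
  rw [pd, hH.fderiv]
  simp [gradPdHmat, PiLp.inner_apply, PiLp.single_apply, Finset.sum_add_distrib, add_mul, mul_comm,
    add_comm]

lemma inner_gradPdHmat (i j p q : Fin N) :
    ⟪gradPdHmat W i j p, gradPdHmat W i j q⟫ =
      ∑ k, (W i k j p + W i p j k) * (W i k j q + W i q j k) := by
  simp [gradPdHmat, PiLp.inner_apply, mul_comm, add_comm]

lemma norm_sq_gradPdHmat (i j k : Fin N) :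
    ‖gradPdHmat W i j k‖ ^ 2 = ∑ l, (W i k j l + W i l j k) ^ 2 :=
  EuclideanSpace.real_norm_sq_eq _

end Gradient

theorem stmt_6_general (N : ℕ) (W : Fin N → Fin N → Fin N → Fin N → ℝ)
    (p q : Fin N) :
    (∫ y : Metric.sphere (0 : EuclideanSpace ℝ (Fin N)) 1,
        (∑ i : Fin N, ∑ j : Fin N, ∑ k : Fin N, (pd N k (Hmat N W i j) ↑y) ^ 2)
          * ((y : EuclideanSpace ℝ (Fin N)) p) * ((y : EuclideanSpace ℝ (Fin N)) q)
          ∂(sphereMeasure N)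
      = 2 * sphereArea N / (N * (N + 2))
          * (∑ i : Fin N, ∑ j : Fin N, ∑ k : Fin N,
              (W i k j p + W i p j k) * (W i k j q + W i q j k))
        + sphereArea N / (N * (N + 2))
          * (∑ i : Fin N, ∑ j : Fin N, ∑ k : Fin N, ∑ l : Fin N,
              (W i k j l + W i l j k) ^ 2)
          * (if p = q then (1 : ℝ) else 0)) ∧
    (∫ y : Metric.sphere (0 : EuclideanSpace ℝ (Fin N)) 1,
        (∑ i : Fin N, ∑ j : Fin N,
          pd N p (Hmat N W i j) ↑y * pd N q (Hmat N W i j) ↑y) ∂(sphereMeasure N)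
      = sphereArea N / N
          * ∑ i : Fin N, ∑ j : Fin N, ∑ k : Fin N,
              (W i k j p + W i p j k) * (W i k j q + W i q j k)) := by
  simp only [pd_Hmat, sphereArea, sphereMeasure, ← measureReal_def]
  constructor
  · have h := integral_sum_sq_inner_mul_inner_mul_inner_toSphere
      (fun s : Fin N × Fin N × Fin N ↦ gradPdHmat W s.1 s.2.1 s.2.2)
      (EuclideanSpace.single p 1) (EuclideanSpace.single q 1)
    simp only [Fintype.sum_prod_type, EuclideanSpace.inner_single_left,
      EuclideanSpace.inner_single_right, PiLp.single_apply, map_one, one_mul,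
      finrank_euclideanSpace_fin, norm_sq_gradPdHmat, conj_trivial, @eq_comm _ q p] at h
    refine h.trans ?_
    simp only [gradPdHmat]
    ring
  · have h := integral_sum_inner_mul_inner_toSphere
      (fun s : Fin N × Fin N ↦ gradPdHmat W s.1 s.2 p) (fun s ↦ gradPdHmat W s.1 s.2 q)
    simpa only [Fintype.sum_prod_type, finrank_euclideanSpace_fin, inner_gradPdHmat] using h

theorem stmt_6 (N : ℕ) (hN : 5 ≤ N)
    (W : Fin N → Fin N → Fin N → Fin N → ℝ)
    (hW1 : ∀ i p j q, W i p j q = - W p i j q)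
    (hW2 : ∀ i p j q, W i p j q = - W i p q j)
    (hW3 : ∀ i p j q, W i p j q = W j q i p)
    (hBianchi : ∀ i p j q, W i p j q + W i j q p + W i q p j = 0)
    (hTrace : ∀ p q, ∑ i : Fin N, W i p i q = 0) :
    ∀ p q : Fin N,
    (∫ y : Metric.sphere (0 : EuclideanSpace ℝ (Fin N)) 1,
        (∑ i : Fin N, ∑ j : Fin N, ∑ k : Fin N, (pd N k (Hmat N W i j) ↑y) ^ 2)
          * ((y : EuclideanSpace ℝ (Fin N)) p) * ((y : EuclideanSpace ℝ (Fin N)) q)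
          ∂(sphereMeasure N)
      = 2 * sphereArea N / (N * (N + 2))
          * (∑ i : Fin N, ∑ j : Fin N, ∑ k : Fin N,
              (W i k j p + W i p j k) * (W i k j q + W i q j k))
        + sphereArea N / (N * (N + 2))
          * (∑ i : Fin N, ∑ j : Fin N, ∑ k : Fin N, ∑ l : Fin N,
              (W i k j l + W i l j k) ^ 2)
          * (if p = q then (1 : ℝ) else 0)) ∧
    (∫ y : Metric.sphere (0 : EuclideanSpace ℝ (Fin N)) 1,
        (∑ i : Fin N, ∑ j : Fin N,
          pd N p (Hmat N W i j) ↑y * pd N q (Hmat N W i j) ↑y) ∂(sphereMeasure N)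
      = sphereArea N / N
          * ∑ i : Fin N, ∑ j : Fin N, ∑ k : Fin N,
              (W i k j p + W i p j k) * (W i k j q + W i q j k)) :=
  stmt_6_general N W
end
end
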